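/- Let ν be a probability measure on a measurable space X, K : X × X → ℝ a bounded measurable function with ∫ K(x,y) dν(y) = 1 for every x ∈ X, and g : X → ℝ a bounded measurable function. Define T g(x) = ∫ K(x,y) g(y) dν(y). Then Var_ν(T g) ≤ (1/2) · Var_ν(g) · ∫∫∫ (K(x₁,y) − K(x₂,y))² dν(x₁) dν(x₂) dν(y). -/

import Mathlib

open MeasureTheory ProbabilityTheory

/-!
The symmetrization `Var u = ½ ∬ (u x₁ - u x₂)²` reduces the variance of `T g` to its increments.
As all rows of `K` have the same integral, `T g x₁ - T g x₂` is the covariance of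
`K (x₁, ·) - K (x₂, ·)` with `g`, whose square is at most `Var g · ∫ (K (x₁, y) - K (x₂, y))² dν(y)`
by Cauchy–Schwarz.
-/

section CauchySchwarz

variable {Ω : Type*} [MeasurableSpace Ω] {μ : Measure Ω} {f g : Ω → ℝ}

lemma inner_toLp_eq_integral_mul (hf : MemLp f 2 μ) (hg : MemLp g 2 μ) :
    inner ℝ (hf.toLp f) (hg.toLp g) = ∫ ω, f ω * g ω ∂μ := by
  rw [L2.inner_def]
  refine integral_congr_ae ?_
  filter_upwards [hf.coeFn_toLp, hg.coeFn_toLp] with ω hfω hgω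
  rw [hfω, hgω, Real.inner_apply]

lemma sq_integral_mul_le (hf : MemLp f 2 μ) (hg : MemLp g 2 μ) :
    (∫ ω, f ω * g ω ∂μ) ^ 2 ≤ (∫ ω, f ω ^ 2 ∂μ) * ∫ ω, g ω ^ 2 ∂μ := by
  simpa only [inner_toLp_eq_integral_mul, ← sq] using
    real_inner_mul_inner_self_le (hf.toLp f) (hg.toLp g)

lemma sq_covariance_le_variance_mul_variance [IsFiniteMeasure μ]
    (hf : MemLp f 2 μ) (hg : MemLp g 2 μ) :
    cov[f, g; μ] ^ 2 ≤ Var[f; μ] * Var[g; μ] := by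
  rw [variance_eq_integral hf.aemeasurable, variance_eq_integral hg.aemeasurable]
  exact sq_integral_mul_le (hf.sub (memLp_const _)) (hg.sub (memLp_const _))

end CauchySchwarz

lemma variance_eq_half_integral_prod_sq_sub {Ω : Type*} [MeasurableSpace Ω] {μ : Measure Ω}
    [IsProbabilityMeasure μ] {u : Ω → ℝ} (hu : MemLp u 2 μ) :
    Var[u; μ] = (1 / 2) * ∫ p, (u p.1 - u p.2) ^ 2 ∂μ.prod μ := by
  have hfst : MemLp (fun p : Ω × Ω => u p.1) 2 (μ.prod μ) := hu.comp_fst μ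
  have hsnd : MemLp (fun p : Ω × Ω => u p.2) 2 (μ.prod μ) := hu.comp_snd μ
  have mean_zero : ∫ p, (u p.1 - u p.2) ∂μ.prod μ = 0 := by
    rw [integral_sub (hfst.integrable one_le_two) (hsnd.integrable one_le_two),
      integral_fun_fst, integral_fun_snd, sub_self]
  have variance_increment : Var[fun p => u p.1 - u p.2; μ.prod μ] = 2 * Var[u; μ] := by
    rw [variance_fun_sub hfst hsnd, covariance_fst_snd_prod hu hu,
      measurePreserving_fst.variance_fun_comp hu.aemeasurable,
      measurePreserving_snd.variance_fun_comp hu.aemeasurable]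
    ring
  have second_moment : Var[fun p => u p.1 - u p.2; μ.prod μ] =
      ∫ p, (u p.1 - u p.2) ^ 2 ∂μ.prod μ :=
    variance_of_integral_eq_zero (hfst.sub hsnd).aemeasurable mean_zero
  linarith

lemma ae_memLp_prodMk_left {X Y E : Type*} [MeasurableSpace X] [MeasurableSpace Y]
    [NormedAddCommGroup E] {μ : Measure X} {ν : Measure Y} [SFinite μ] [SFinite ν]
    {p : ENNReal} {f : X × Y → E} (hp₀ : p ≠ 0) (hp : p ≠ ⊤) (hf : MemLp f p (μ.prod ν)) :
    ∀ᵐ x ∂μ, MemLp (fun y => f (x, y)) p ν := by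
  filter_upwards [hf.aestronglyMeasurable.prodMk_left,
    (hf.integrable_norm_rpow hp₀ hp).prod_right_ae] with x hmeas hint
  exact (integrable_norm_rpow_iff hmeas hp₀ hp).1 hint

section Kernel

variable {X Y : Type*} [MeasurableSpace Y]

/-- The integral operator `T g (x) = ∫ K(x, y) g(y) dν(y)`, with a kernel between possibly
different spaces. -/
noncomputable def integralOperator (ν : Measure Y) (K : X × Y → ℝ) (g : Y → ℝ) (x : X) : ℝ :=
  ∫ y, K (x, y) * g y ∂ν

/-- The squared `L²(ν)` distance between the rows `K (x₁, ·)` and `K (x₂, ·)`, measuring how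
strongly `K` depends on its first argument. -/
noncomputable def rowDistSq (ν : Measure Y) (K : X × Y → ℝ) (x₁ x₂ : X) : ℝ :=
  ∫ y, (K (x₁, y) - K (x₂, y)) ^ 2 ∂ν

variable {ν : Measure Y} {K : X × Y → ℝ} {g : Y → ℝ}

lemma sq_sub_integralOperator_le [IsProbabilityMeasure ν] {x₁ x₂ : X}
    (hx₁ : MemLp (fun y => K (x₁, y)) 2 ν) (hx₂ : MemLp (fun y => K (x₂, y)) 2 ν)
    (hrow : ∫ y, K (x₁, y) ∂ν = ∫ y, K (x₂, y) ∂ν) (hg : MemLp g 2 ν) :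
    (integralOperator ν K g x₁ - integralOperator ν K g x₂) ^ 2 ≤
      Var[g; ν] * rowDistSq ν K x₁ x₂ := by
  have hdiff : MemLp (fun y => K (x₁, y) - K (x₂, y)) 2 ν := hx₁.sub hx₂
  have increment_eq_covariance : integralOperator ν K g x₁ - integralOperator ν K g x₂ =
      cov[fun y => K (x₁, y) - K (x₂, y), g; ν] := by
    rw [covariance_fun_sub_left hx₁ hx₂ hg, covariance_eq_sub hx₁ hg, covariance_eq_sub hx₂ hg,
      hrow, sub_sub_sub_cancel_right]
    rfl
  calc (integralOperator ν K g x₁ - integralOperator ν K g x₂) ^ 2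
      = cov[fun y => K (x₁, y) - K (x₂, y), g; ν] ^ 2 := by rw [increment_eq_covariance]
    _ ≤ Var[fun y => K (x₁, y) - K (x₂, y); ν] * Var[g; ν] :=
        sq_covariance_le_variance_mul_variance hdiff hg
    _ ≤ rowDistSq ν K x₁ x₂ * Var[g; ν] :=
        mul_le_mul_of_nonneg_right (variance_le_expectation_sq hdiff.aestronglyMeasurable)
          (variance_nonneg g ν)
    _ = Var[g; ν] * rowDistSq ν K x₁ x₂ := mul_comm _ _

variable [MeasurableSpace X] {μ : Measure X}

lemma memLp_two_integralOperator [SFinite μ] [SFinite ν] (hK : MemLp K 2 (μ.prod ν))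
    (hg : MemLp g 2 ν) : MemLp (integralOperator ν K g) 2 μ := by
  have hmeas : AEStronglyMeasurable (integralOperator ν K g) μ :=
    (hK.aestronglyMeasurable.mul hg.aestronglyMeasurable.comp_snd).integral_prod_right'
  rw [memLp_two_iff_integrable_sq hmeas]
  refine (hK.integrable_sq.integral_prod_left.mul_const (∫ y, g y ^ 2 ∂ν)).mono'
    (hmeas.pow 2) ?_
  filter_upwards [ae_memLp_prodMk_left two_ne_zero ENNReal.ofNat_ne_top hK] with x hx
  rw [Real.norm_of_nonneg (sq_nonneg _)]
  exact sq_integral_mul_le hx hg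

lemma integrable_rowDistSq [IsProbabilityMeasure μ] [SFinite ν] (hK : MemLp K 2 (μ.prod ν)) :
    Integrable (fun p : X × X => rowDistSq ν K p.1 p.2) (μ.prod μ) := by
  have row_left : MemLp (fun q : (X × X) × Y => K (q.1.1, q.2)) 2 ((μ.prod μ).prod ν) :=
    hK.comp_measurePreserving (measurePreserving_fst.prod (.id ν))
  have row_right : MemLp (fun q : (X × X) × Y => K (q.1.2, q.2)) 2 ((μ.prod μ).prod ν) :=
    hK.comp_measurePreserving (measurePreserving_snd.prod (.id ν))
  exact (row_left.sub row_right).integrable_sq.integral_prod_left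

theorem variance_contraction_of_kernel_general [IsProbabilityMeasure μ] [IsProbabilityMeasure ν]
    {c : ℝ} (hK : MemLp K 2 (μ.prod ν)) (hrow : ∀ᵐ x ∂μ, ∫ y, K (x, y) ∂ν = c)
    (hg : MemLp g 2 ν) :
    Var[integralOperator ν K g; μ] ≤
      (1 / 2) * Var[g; ν] * ∫ x₁, ∫ x₂, rowDistSq ν K x₁ x₂ ∂μ ∂μ := by
  have hT := memLp_two_integralOperator hK hg
  have hrows : ∀ᵐ x ∂μ, MemLp (fun y => K (x, y)) 2 ν ∧ ∫ y, K (x, y) ∂ν = c :=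
    (ae_memLp_prodMk_left two_ne_zero ENNReal.ofNat_ne_top hK).and hrow
  have increment_le : ∀ᵐ p ∂μ.prod μ,
      (integralOperator ν K g p.1 - integralOperator ν K g p.2) ^ 2 ≤
        Var[g; ν] * rowDistSq ν K p.1 p.2 := by
    filter_upwards [measurePreserving_fst.quasiMeasurePreserving.ae hrows,
      measurePreserving_snd.quasiMeasurePreserving.ae hrows] with p ⟨hL₁, hc₁⟩ ⟨hL₂, hc₂⟩
    exact sq_sub_integralOperator_le hL₁ hL₂ (hc₁.trans hc₂.symm) hg
  calc Var[integralOperator ν K g; μ]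
      = (1 / 2) * ∫ p, (integralOperator ν K g p.1 - integralOperator ν K g p.2) ^ 2 ∂μ.prod μ :=
        variance_eq_half_integral_prod_sq_sub hT
    _ ≤ (1 / 2) * ∫ p, Var[g; ν] * rowDistSq ν K p.1 p.2 ∂μ.prod μ :=
        mul_le_mul_of_nonneg_left
          (integral_mono_ae ((hT.comp_fst μ).sub (hT.comp_snd μ)).integrable_sq
            ((integrable_rowDistSq hK).const_mul _) increment_le) one_half_pos.le
    _ = (1 / 2) * Var[g; ν] * ∫ x₁, ∫ x₂, rowDistSq ν K x₁ x₂ ∂μ ∂μ := by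
        rw [integral_const_mul, integral_prod _ (integrable_rowDistSq hK), mul_assoc]

end Kernel

theorem variance_contraction_of_kernel
    {X : Type*} [MeasurableSpace X]
    (ν : Measure X) [IsProbabilityMeasure ν]
    (K : X × X → ℝ) (hK : Measurable K) (hKbd : ∃ C : ℝ, ∀ p, |K p| ≤ C)
    (hK1 : ∀ x : X, ∫ y, K (x, y) ∂ν = 1)
    (g : X → ℝ) (hg : Measurable g) (hgbd : ∃ C : ℝ, ∀ x, |g x| ≤ C) :
    variance (fun x => ∫ y, K (x, y) * g y ∂ν) ν ≤
      (1 / 2) * variance g ν *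
        ∫ x₁, ∫ x₂, ∫ y, (K (x₁, y) - K (x₂, y)) ^ 2 ∂ν ∂ν ∂ν := by
  obtain ⟨C, hC⟩ := hKbd
  obtain ⟨D, hD⟩ := hgbd
  exact variance_contraction_of_kernel_general
    (.of_bound hK.aestronglyMeasurable C (.of_forall hC)) (.of_forall hK1)
    (.of_bound hg.aestronglyMeasurable D (.of_forall hD))
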